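/- arXiv:1612.05684 — 4 statements merged into one kernel-verified Lean document; each statement's English description precedes it below -/
import Mathlib

section
/- Weak duality for the canonical dual of the Knapsack problem: for every binary vector ρ ∈ {0,1}^n with ∑_e a_e ρ_e ≤ V_c, and every pair (σ, ς) with σ_e > 0 for all e and ς ≥ 0, one has P^d(σ, ς) ≤ −∑_e c_e ρ_e. -/
/-!
Attach a multiplier `σ e` to each constraint `ρ e ^ 2 ≤ ρ e` and `ς` to the capacity constraint.
At a feasible `ρ` the resulting Lagrangian lies below the objective `-∑ e, c e * ρ e`. As a function
of `ρ` it is a separable quadratic with leading coefficients `σ e > 0`, and completing the squares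
shows that the canonical dual function is a lower bound for it.
-/

section Lagrangian

variable {ι R : Type*} [Fintype ι] [CommRing R]

/-- The Lagrangian (total complementary function) of the knapsack problem, which minimizes
`-∑ e, c e * ρ e` under the capacity constraint `∑ e, a e * ρ e ≤ V`. Binarity of `ρ` enters through
the quadratic constraints `ρ e ^ 2 ≤ ρ e`, with multipliers `σ e`; the capacity constraint has
multiplier `ς`. -/
def knapsackLagrangian (c a : ι → R) (V : R) (ρ σ : ι → R) (ς : R) : R :=
  -∑ e, c e * ρ e + ∑ e, σ e * (ρ e ^ 2 - ρ e) + ς * (∑ e, a e * ρ e - V)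

theorem knapsackLagrangian_eq_sum_quadratic (c a : ι → R) (V : R) (ρ σ : ι → R) (ς : R) :
    knapsackLagrangian c a V ρ σ ς =
      ∑ e, (σ e * ρ e ^ 2 - (σ e - ς * a e + c e) * ρ e) - ς * V := by
  have termwise (e : ι) : σ e * ρ e ^ 2 - (σ e - ς * a e + c e) * ρ e =
      -(c e * ρ e) + σ e * (ρ e ^ 2 - ρ e) + ς * (a e * ρ e) := by ring
  simp only [knapsackLagrangian, termwise, Finset.sum_add_distrib, Finset.sum_neg_distrib,
    ← Finset.mul_sum]
  ring

theorem knapsackLagrangian_le_objective [PartialOrder R] [IsOrderedRing R]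
    (c : ι → R) {a ρ σ : ι → R} {V ς : R} (hρ : ∀ e, ρ e ∈ Set.Icc 0 1)
    (hcap : ∑ e, a e * ρ e ≤ V) (hσ : ∀ e, 0 ≤ σ e) (hς : 0 ≤ ς) :
    knapsackLagrangian c a V ρ σ ς ≤ -∑ e, c e * ρ e := by
  have box_penalty : ∑ e, σ e * (ρ e ^ 2 - ρ e) ≤ 0 := Finset.sum_nonpos fun e _ ↦
    mul_nonpos_of_nonneg_of_nonpos (hσ e) (sub_nonpos.mpr (sq_le (hρ e).1 (hρ e).2))
  have capacity_penalty : ς * (∑ e, a e * ρ e - V) ≤ 0 :=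
    mul_nonpos_of_nonneg_of_nonpos hς (sub_nonpos.mpr hcap)
  exact (add_le_of_nonpos_right capacity_penalty).trans (add_le_of_nonpos_right box_penalty)

end Lagrangian

section CanonicalDual

variable {ι 𝕜 : Type*} [Fintype ι] [Field 𝕜]

/-- The canonical dual function `P^d(σ, ς)` of the knapsack problem, a lower bound for the
Lagrangian when all `σ e` are positive. By `x / 0 = 0` the `e`-th summand vanishes when
`σ e = 0`. -/
def knapsackCanonicalDual (c a : ι → 𝕜) (V : 𝕜) (σ : ι → 𝕜) (ς : 𝕜) : 𝕜 :=
  -(1 / 4) * ∑ e, (σ e - ς * a e + c e) ^ 2 / σ e - ς * V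

variable [LinearOrder 𝕜] [IsStrictOrderedRing 𝕜]

theorem neg_quarter_mul_sq_div_le_quadratic {σ : 𝕜} (hσ : 0 < σ) (τ x : 𝕜) :
    -(1 / 4) * (τ ^ 2 / σ) ≤ σ * x ^ 2 - τ * x := by
  have young : 2 * x * (τ / 2) ≤ σ * x ^ 2 + σ⁻¹ * (τ / 2) ^ 2 := two_mul_le_add_mul_sq hσ
  linear_combination young

theorem knapsackCanonicalDual_le_knapsackLagrangian (c a : ι → 𝕜) (V : 𝕜) (ρ : ι → 𝕜)
    {σ : ι → 𝕜} (hσ : ∀ e, 0 < σ e) (ς : 𝕜) :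
    knapsackCanonicalDual c a V σ ς ≤ knapsackLagrangian c a V ρ σ ς := by
  rw [knapsackCanonicalDual, knapsackLagrangian_eq_sum_quadratic, Finset.mul_sum]
  gcongr with e
  exact neg_quarter_mul_sq_div_le_quadratic (hσ e) _ _

theorem knapsack_weak_duality_general (c a : ι → 𝕜) (V : 𝕜) (ρ : ι → 𝕜)
    (hρ : ∀ e, ρ e ∈ Set.Icc 0 1) (hcap : ∑ e, a e * ρ e ≤ V)
    (σ : ι → 𝕜) (hσ : ∀ e, 0 < σ e) (ς : 𝕜) (hς : 0 ≤ ς) :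
    knapsackCanonicalDual c a V σ ς ≤ -∑ e, c e * ρ e :=
  (knapsackCanonicalDual_le_knapsackLagrangian c a V ρ hσ ς).trans <|
    knapsackLagrangian_le_objective c hρ hcap (fun e ↦ (hσ e).le) hς

end CanonicalDual

/-- Weak duality for the canonical dual of the Knapsack problem. -/
theorem knapsack_weak_duality (n : ℕ) (c a : Fin n → ℝ) (Vc : ℝ)
    (ρ : Fin n → ℝ) (hbin : ∀ e, ρ e = 0 ∨ ρ e = 1)
    (hfeas : ∑ e, a e * ρ e ≤ Vc)
    (σ : Fin n → ℝ) (hσ : ∀ e, 0 < σ e) (ς : ℝ) (hς : 0 ≤ ς) :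
    -(1/4) * ∑ e, (σ e - ς * a e + c e)^2 / σ e - ς * Vc ≤ -∑ e, c e * ρ e := by
  have hρ (e : Fin n) : ρ e ∈ Set.Icc 0 1 := by rcases hbin e with h | h <;> simp [h]
  exact knapsack_weak_duality_general c a Vc ρ hρ hfeas σ hσ ς hς
end

section
/- Analytical solution of the Knapsack problem via canonical duality (Theorem 2): suppose σ̄ : Fin n → ℝ with σ̄_e > 0 for all e and ς̄ ≥ 0 are such that the vector ρ̄ defined by ρ̄_e = τ_e(σ̄,ς̄)/(2σ̄_e) satisfies ρ̄_e ∈ {0,1} for all e, ∑_e a_e ρ̄_e ≤ V_c, and the complementarity condition ς̄·(∑_e a_e ρ̄_e − V_c) = 0. Then ρ̄ is a global minimizer of P(ρ) = −∑_e c_e ρ_e over all binary vectors ρ ∈ {0,1}^n with ∑_e a_e ρ_e ≤ V_c, and moreover −∑_e c_e ρ̄_e = P^d(σ̄, ς̄). -/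
/-!
Relaxing the constraints `ρ e ^ 2 = ρ e` with multipliers `σ` and the capacity constraint with a
multiplier `ς` gives the total complementary function. Completing the square in `ρ` writes it as the
canonical dual plus `∑ e, σ e * (ρ e - τ e / (2 * σ e)) ^ 2`. For `0 < σ` and `0 ≤ ς` the dual is
therefore a lower bound for the objective on the feasible set, even on its relaxation to `[0, 1]ⁿ`.
At `ρ = τ / (2σ)` the square vanishes, and if this point is binary and satisfies complementary
slackness, so do the penalty terms: the objective attains the bound there.
-/

namespace Knapsack

variable {ι R K : Type*} [Fintype ι]

/-- The linear coefficient `τ` of `-ρ` in the total complementary function. -/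
def tau [CommRing R] (c a σ : ι → R) (ς : R) (e : ι) : R :=
  σ e - ς * a e + c e

/-- Gao's total complementary function `Ξ(ρ, σ, ς)`: the Lagrangian of the knapsack problem in which
the binary constraints are encoded as `ρ e ^ 2 - ρ e = 0` with multipliers `σ`, and the capacity
constraint has multiplier `ς`. -/
def totalComplementary [CommRing R] (c a : ι → R) (V : R) (ρ σ : ι → R) (ς : R) : R :=
  -∑ e, c e * ρ e + ∑ e, σ e * (ρ e ^ 2 - ρ e) + ς * (∑ e, a e * ρ e - V)

/-- The canonical dual function `P^d(σ, ς)`, the minimum of `totalComplementary` over all vectors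
`ρ` when `σ` is positive. The division makes it meaningful only where no `σ e` vanishes. -/
def canonicalDual [Field K] (c a : ι → K) (V : K) (σ : ι → K) (ς : K) : K :=
  -(1 / 4) * ∑ e, tau c a σ ς e ^ 2 / σ e - ς * V

section CommRing

variable [CommRing R] {c a ρ σ : ι → R} {V ς : R}

theorem totalComplementary_eq_sum_sub :
    totalComplementary c a V ρ σ ς =
      ∑ e, (σ e * ρ e ^ 2 - tau c a σ ς e * ρ e) - ς * V := by
  simp only [totalComplementary, tau, mul_sub, Finset.mul_sum, ← Finset.sum_neg_distrib,
    ← add_sub_assoc, ← Finset.sum_add_distrib]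
  congr 1
  exact Finset.sum_congr rfl fun e _ ↦ by ring

theorem totalComplementary_eq_neg_sum (hρ : ∀ e, ρ e = 0 ∨ ρ e = 1)
    (hcomp : ς * (∑ e, a e * ρ e - V) = 0) :
    totalComplementary c a V ρ σ ς = -∑ e, c e * ρ e := by
  have hpenalty : ∑ e, σ e * (ρ e ^ 2 - ρ e) = 0 :=
    Finset.sum_eq_zero fun e _ ↦ by rcases hρ e with h | h <;> simp [h]
  rw [totalComplementary, hpenalty, hcomp, add_zero, add_zero]

theorem totalComplementary_le_neg_sum [LinearOrder R] [IsStrictOrderedRing R]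
    (hσ : ∀ e, 0 ≤ σ e) (hς : 0 ≤ ς) (hρ : ∀ e, ρ e ∈ Set.Icc 0 1)
    (hV : ∑ e, a e * ρ e ≤ V) :
    totalComplementary c a V ρ σ ς ≤ -∑ e, c e * ρ e := by
  have hpenalty : ∑ e, σ e * (ρ e ^ 2 - ρ e) ≤ 0 :=
    Finset.sum_nonpos fun e _ ↦ mul_nonpos_of_nonneg_of_nonpos (hσ e) <|
      sub_nonpos.2 (pow_le_of_le_one (hρ e).1 (hρ e).2 two_ne_zero)
  have hcapacity : ς * (∑ e, a e * ρ e - V) ≤ 0 :=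
    mul_nonpos_of_nonneg_of_nonpos hς (sub_nonpos.2 hV)
  rw [totalComplementary]
  linarith

end CommRing

section Field

variable [Field K] {c a ρ σ : ι → K} {V ς : K}

theorem totalComplementary_eq_canonicalDual_add [NeZero (2 : K)] (hσ : ∀ e, σ e ≠ 0) :
    totalComplementary c a V ρ σ ς =
      canonicalDual c a V σ ς + ∑ e, σ e * (ρ e - tau c a σ ς e / (2 * σ e)) ^ 2 := by
  have h_two : (2 : K) ≠ 0 := two_ne_zero
  have h_four : (4 : K) = 2 ^ 2 := by norm_num
  have complete_square (e : ι) : σ e * ρ e ^ 2 - tau c a σ ς e * ρ e =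
      -(1 / 4) * (tau c a σ ς e ^ 2 / σ e) + σ e * (ρ e - tau c a σ ς e / (2 * σ e)) ^ 2 := by
    have := hσ e
    rw [h_four]
    field_simp
    ring
  simp only [totalComplementary_eq_sum_sub, canonicalDual, complete_square,
    Finset.sum_add_distrib, Finset.mul_sum]
  ring

theorem totalComplementary_eq_canonicalDual [NeZero (2 : K)] (hσ : ∀ e, σ e ≠ 0)
    (hρ : ∀ e, ρ e = tau c a σ ς e / (2 * σ e)) :
    totalComplementary c a V ρ σ ς = canonicalDual c a V σ ς := by
  simp [totalComplementary_eq_canonicalDual_add hσ, ← hρ]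

variable [LinearOrder K] [IsStrictOrderedRing K]

theorem canonicalDual_le_totalComplementary (hσ : ∀ e, 0 < σ e) :
    canonicalDual c a V σ ς ≤ totalComplementary c a V ρ σ ς := by
  rw [totalComplementary_eq_canonicalDual_add fun e ↦ (hσ e).ne']
  exact le_add_of_nonneg_right <| Finset.sum_nonneg fun e _ ↦ mul_nonneg (hσ e).le (sq_nonneg _)

theorem canonicalDual_le_neg_sum (hσ : ∀ e, 0 < σ e) (hς : 0 ≤ ς)
    (hρ : ∀ e, ρ e ∈ Set.Icc 0 1) (hV : ∑ e, a e * ρ e ≤ V) :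
    canonicalDual c a V σ ς ≤ -∑ e, c e * ρ e :=
  (canonicalDual_le_totalComplementary hσ).trans <|
    totalComplementary_le_neg_sum (fun e ↦ (hσ e).le) hς hρ hV

end Field

end Knapsack

open Knapsack in
theorem knapsack_analytic_solution_general {ι K : Type*} [Fintype ι] [Field K] [LinearOrder K]
    [IsStrictOrderedRing K] {c a : ι → K} {V : K} {σ : ι → K} (hσ : ∀ e, 0 < σ e)
    {ς : K} (hς : 0 ≤ ς) {ρbar : ι → K}
    (hdef : ∀ e, ρbar e = tau c a σ ς e / (2 * σ e))
    (hbin : ∀ e, ρbar e = 0 ∨ ρbar e = 1)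
    (hcomp : ς * (∑ e, a e * ρbar e - V) = 0) :
    (∀ ρ : ι → K, (∀ e, ρ e ∈ Set.Icc 0 1) → ∑ e, a e * ρ e ≤ V →
        -∑ e, c e * ρbar e ≤ -∑ e, c e * ρ e) ∧
      -∑ e, c e * ρbar e = canonicalDual c a V σ ς := by
  have hdual : -∑ e, c e * ρbar e = canonicalDual c a V σ ς :=
    (totalComplementary_eq_neg_sum hbin hcomp).symm.trans <|
      totalComplementary_eq_canonicalDual (fun e ↦ (hσ e).ne') hdef
  exact ⟨fun ρ hρ hV ↦ hdual.trans_le (canonicalDual_le_neg_sum hσ hς hρ hV), hdual⟩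

/-- Analytical solution of the Knapsack problem via canonical duality (Theorem 2). -/
theorem knapsack_analytic_solution (n : ℕ) (c a : Fin n → ℝ) (Vc : ℝ)
    (σ : Fin n → ℝ) (hσ : ∀ e, 0 < σ e) (ς : ℝ) (hς : 0 ≤ ς)
    (ρbar : Fin n → ℝ)
    (hdef : ∀ e, ρbar e = (σ e - ς * a e + c e) / (2 * σ e))
    (hbin : ∀ e, ρbar e = 0 ∨ ρbar e = 1)
    (hfeas : ∑ e, a e * ρbar e ≤ Vc)
    (hcomp : ς * (∑ e, a e * ρbar e - Vc) = 0) :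
    (∀ ρ : Fin n → ℝ, (∀ e, ρ e = 0 ∨ ρ e = 1) → ∑ e, a e * ρ e ≤ Vc →
        -∑ e, c e * ρbar e ≤ -∑ e, c e * ρ e) ∧
    -∑ e, c e * ρbar e = -(1/4) * ∑ e, (σ e - ς * a e + c e)^2 / σ e - ς * Vc :=
  (knapsack_analytic_solution_general hσ hς hdef hbin hcomp).imp_left fun h ρ hρ ↦
    h ρ fun e ↦ by rcases hρ e with h | h <;> simp [h]
end

section
/- Complementary–dual principle (Theorem 1, concrete form): suppose (ρ̄, σ̄, ς̄) with σ̄_e > 0 for all e and ς̄ ≥ 0 satisfies the KKT conditions: stationarity −c_e + σ̄_e(2ρ̄_e − 1) + ς̄ a_e = 0 for all e, ρ̄_e² = ρ̄_e for all e, ∑_e a_e ρ̄_e ≤ V_c, and ς̄·(∑_e a_e ρ̄_e − V_c) = 0. Then the three values coincide: −∑_e c_e ρ̄_e = Ξ(ρ̄, σ̄, ς̄) = P^d(σ̄, ς̄). -/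
/-!
For fixed multipliers `σ` and `ς`, the function `Ξ(·, σ, ς)` is a separable quadratic in `ρ`, and
completing the square in each coordinate gives
`Ξ(ρ, σ, ς) = P^d(σ, ς) + ∑ e, σ e * (ρ e - τ e / (2 * σ e)) ^ 2`.
Stationarity in `ρ` says exactly that every square vanishes, so `Ξ = P^d` at a stationary point.
The binary constraints and complementary slackness annihilate the two multiplier terms of `Ξ`,
leaving the primal value `-∑ e, c e * ρ e`.
-/

section CommRing

variable {ι R : Type*} [CommRing R]

/-- The linear coefficient `τ_e(σ, ς)`: up to sign, the coefficient of `ρ_e` in the total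
complementary function. -/
def linearCoeff (c a σ : ι → R) (ς : R) (e : ι) : R :=
  σ e - ς * a e + c e

variable [Fintype ι]

/-- The total complementary function `Ξ(ρ, σ, ς)`: the Lagrangian of minimizing `-∑ e, c e * ρ e`
subject to `ρ e ^ 2 = ρ e` (multipliers `σ`) and `∑ e, a e * ρ e ≤ V` (multiplier `ς`). -/
def totalComplementary (c a : ι → R) (V : R) (ρ σ : ι → R) (ς : R) : R :=
  (-∑ e, c e * ρ e) + (∑ e, σ e * (ρ e ^ 2 - ρ e)) + ς * (∑ e, a e * ρ e - V)

theorem neg_sum_mul_eq_totalComplementary {c a ρ σ : ι → R} {V ς : R}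
    (hbin : ∀ e, ρ e ^ 2 = ρ e) (hcomp : ς * (∑ e, a e * ρ e - V) = 0) :
    -∑ e, c e * ρ e = totalComplementary c a V ρ σ ς := by
  simp [totalComplementary, hbin, hcomp]

theorem totalComplementary_eq_sum_quadratic (c a : ι → R) (V : R) (ρ σ : ι → R) (ς : R) :
    totalComplementary c a V ρ σ ς =
      ∑ e, (σ e * ρ e ^ 2 - linearCoeff c a σ ς e * ρ e) - ς * V := by
  rw [totalComplementary, mul_sub, Finset.mul_sum, ← Finset.sum_neg_distrib,
    ← Finset.sum_add_distrib, ← add_sub_assoc, ← Finset.sum_add_distrib]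
  congr 1
  refine Finset.sum_congr rfl fun e _ ↦ ?_
  rw [linearCoeff]
  ring

end CommRing

section Field

variable {ι K : Type*} [Field K]

/-- The canonical dual function `P^d(σ, ς)`, in closed form. It is meaningful when every `σ e` is
nonzero and `K` does not have characteristic two; elsewhere division by zero yields `0`. -/
def canonicalDual [Fintype ι] (c a : ι → K) (V : K) (σ : ι → K) (ς : K) : K :=
  -(1 / 4) * ∑ e, linearCoeff c a σ ς e ^ 2 / σ e - ς * V

variable [NeZero (2 : K)]

theorem mul_sq_sub_mul_eq_completed_square {s : K} (hs : s ≠ 0) (t x : K) :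
    s * x ^ 2 - t * x = -(1 / 4) * (t ^ 2 / s) + s * (x - t / (2 * s)) ^ 2 := by
  have two_ne : (2 : K) ≠ 0 := two_ne_zero
  rw [show (4 : K) = 2 * 2 by norm_num]
  field_simp
  ring

theorem stationary_iff_eq_linearCoeff_div {c a ρ σ : ι → K} {ς : K} {e : ι} (hσ : σ e ≠ 0) :
    -c e + σ e * (2 * ρ e - 1) + ς * a e = 0 ↔
      ρ e = linearCoeff c a σ ς e / (2 * σ e) := by
  rw [eq_div_iff (mul_ne_zero two_ne_zero hσ), linearCoeff]
  constructor <;> intro h <;> linear_combination h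

variable [Fintype ι]

theorem totalComplementary_eq_canonicalDual_add_sum_sq (c a : ι → K) (V : K) (ρ : ι → K)
    {σ : ι → K} (hσ : ∀ e, σ e ≠ 0) (ς : K) :
    totalComplementary c a V ρ σ ς =
      canonicalDual c a V σ ς +
        ∑ e, σ e * (ρ e - linearCoeff c a σ ς e / (2 * σ e)) ^ 2 := by
  simp_rw [totalComplementary_eq_sum_quadratic, mul_sq_sub_mul_eq_completed_square (hσ _),
    Finset.sum_add_distrib, ← Finset.mul_sum, canonicalDual]
  ring

theorem totalComplementary_eq_canonicalDual {c a ρ σ : ι → K} {V ς : K} (hσ : ∀ e, σ e ≠ 0)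
    (hstat : ∀ e, -c e + σ e * (2 * ρ e - 1) + ς * a e = 0) :
    totalComplementary c a V ρ σ ς = canonicalDual c a V σ ς := by
  have hρ : ∀ e, ρ e - linearCoeff c a σ ς e / (2 * σ e) = 0 := fun e ↦
    sub_eq_zero.mpr ((stationary_iff_eq_linearCoeff_div (hσ e)).mp (hstat e))
  simp [totalComplementary_eq_canonicalDual_add_sum_sq c a V ρ hσ ς, hρ]

theorem complementary_dual_principle_general {c a ρ σ : ι → K} {V ς : K} (hσ : ∀ e, σ e ≠ 0)
    (hstat : ∀ e, -c e + σ e * (2 * ρ e - 1) + ς * a e = 0)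
    (hbin : ∀ e, ρ e ^ 2 = ρ e) (hcomp : ς * (∑ e, a e * ρ e - V) = 0) :
    -∑ e, c e * ρ e = totalComplementary c a V ρ σ ς ∧
      totalComplementary c a V ρ σ ς = canonicalDual c a V σ ς :=
  ⟨neg_sum_mul_eq_totalComplementary hbin hcomp, totalComplementary_eq_canonicalDual hσ hstat⟩

end Field

/-- Complementary–dual principle (Theorem 1, concrete form). -/
theorem complementary_dual_principle (n : ℕ) (c a : Fin n → ℝ) (Vc : ℝ)
    (ρbar σbar : Fin n → ℝ) (ςbar : ℝ)
    (hσ : ∀ e, 0 < σbar e) (hς : 0 ≤ ςbar)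
    (hstat : ∀ e, -c e + σbar e * (2 * ρbar e - 1) + ςbar * a e = 0)
    (hbin : ∀ e, (ρbar e)^2 = ρbar e)
    (hfeas : ∑ e, a e * ρbar e ≤ Vc)
    (hcomp : ςbar * (∑ e, a e * ρbar e - Vc) = 0) :
    -∑ e, c e * ρbar e =
      (-∑ e, c e * ρbar e) + (∑ e, σbar e * ((ρbar e)^2 - ρbar e)) + ςbar * (∑ e, a e * ρbar e - Vc) ∧
    (-∑ e, c e * ρbar e) + (∑ e, σbar e * ((ρbar e)^2 - ρbar e)) + ςbar * (∑ e, a e * ρbar e - Vc) =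
      -(1/4) * ∑ e, (σbar e - ςbar * a e + c e)^2 / σbar e - ςbar * Vc :=
  complementary_dual_principle_general (fun e ↦ (hσ e).ne') hstat hbin hcomp
end

section
/- Concavity of the canonical dual function: the function (σ, ς) ↦ P^d(σ, ς) is concave on the open convex set {(σ, ς) ∈ ℝ^n × ℝ : σ_e > 0 for all e}. -/
/-! The function `(u, x) ↦ u ^ 2 / x` is the perspective of the square, and its convexity on `0 < x`
is the two-term case of Titu's lemma `(u + v) ^ 2 / (x + y) ≤ u ^ 2 / x + v ^ 2 / y`, since the
function is homogeneous of degree one. Each summand `τ_e ^ 2 / σ_e` is this function composed with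
an affine map, so `P^d` is a negative multiple of a sum of convex functions plus a linear term. -/

section ConvexOn

variable {𝕜 E β ι : Type*}

theorem convexOn_finset_sum [Semiring 𝕜] [PartialOrder 𝕜] [AddCommMonoid E] [SMul 𝕜 E]
    [AddCommMonoid β] [PartialOrder β] [IsOrderedAddMonoid β] [Module 𝕜 β] {s : Set E}
    (hs : Convex 𝕜 s) {t : Finset ι} {f : ι → E → β} (hf : ∀ i ∈ t, ConvexOn 𝕜 s (f i)) :
    ConvexOn 𝕜 s (∑ i ∈ t, f i) :=
  Finset.sum_induction f (ConvexOn 𝕜 s) (fun _ _ ↦ ConvexOn.add) (convexOn_const 0 hs) hf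

variable [Field 𝕜] [LinearOrder 𝕜] [IsStrictOrderedRing 𝕜]

theorem add_sq_div_add_le {x y : 𝕜} (u v : 𝕜) (hx : 0 < x) (hy : 0 < y) :
    (u + v) ^ 2 / (x + y) ≤ u ^ 2 / x + v ^ 2 / y := by
  simpa using Finset.univ.sq_sum_div_le_sum_sq_div ![u, v] (g := ![x, y]) (by simp [hx, hy])

theorem convexOn_sq_div : ConvexOn 𝕜 {p : 𝕜 × 𝕜 | 0 < p.2} (fun p ↦ p.1 ^ 2 / p.2) := by
  refine convexOn_iff_forall_pos.2 ⟨(convex_Ioi 0).linear_preimage (LinearMap.snd 𝕜 𝕜 𝕜), ?_⟩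
  rintro ⟨u, x⟩ (hx : 0 < x) ⟨v, y⟩ (hy : 0 < y) s t hs ht -
  calc (s * u + t * v) ^ 2 / (s * x + t * y)
      ≤ (s * u) ^ 2 / (s * x) + (t * v) ^ 2 / (t * y) :=
        add_sq_div_add_le (s * u) (t * v) (mul_pos hs hx) (mul_pos ht hy)
    _ = s * (u ^ 2 / x) + t * (v ^ 2 / y) := by field_simp

variable [AddCommGroup E] [Module 𝕜 E]

theorem convexOn_sq_div_affineMap (f g : E →ᵃ[𝕜] 𝕜) :
    ConvexOn 𝕜 {x | 0 < g x} (fun x ↦ f x ^ 2 / g x) :=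
  convexOn_sq_div.comp_affineMap (f.prod g)

theorem convex_setOf_forall_affineMap_pos (g : ι → E →ᵃ[𝕜] 𝕜) :
    Convex 𝕜 {x | ∀ i, 0 < g i x} := by
  rw [Set.ofPred_forall]
  exact convex_iInter fun i ↦ (convex_Ioi (0 : 𝕜)).affine_preimage (g i)

theorem convexOn_sum_sq_div_affineMap [Fintype ι] (f g : ι → E →ᵃ[𝕜] 𝕜) :
    ConvexOn 𝕜 {x | ∀ i, 0 < g i x} (fun x ↦ ∑ i, f i x ^ 2 / g i x) := by
  have hs : Convex 𝕜 {x | ∀ i, 0 < g i x} := convex_setOf_forall_affineMap_pos g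
  simpa only [Finset.sum_fn] using convexOn_finset_sum hs fun i _ ↦
    (convexOn_sq_div_affineMap (f i) (g i)).subset (fun _ hx ↦ hx i) hs

end ConvexOn

section CanonicalDual

variable {R ι : Type*} [CommRing R]

/-- The coordinate `(σ, ς) ↦ σ_e` of the dual variable, as an affine map. -/
def dualCoord (e : ι) : (ι → R) × R →ᵃ[R] R :=
  (LinearMap.proj e ∘ₗ LinearMap.fst R (ι → R) R).toAffineMap

/-- The function `τ_e(σ, ς) = σ_e - ς a_e + c_e` in the numerators of `P^d`, as an affine map. -/
def dualTau (c a : ι → R) (e : ι) : (ι → R) × R →ᵃ[R] R :=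
  dualCoord e - (a e • LinearMap.snd R (ι → R) R).toAffineMap + AffineMap.const R _ (c e)

@[simp]
theorem dualCoord_apply (e : ι) (p : (ι → R) × R) :
    (dualCoord e : (ι → R) × R →ᵃ[R] R) p = p.1 e := rfl

@[simp]
theorem dualTau_apply (c a : ι → R) (e : ι) (p : (ι → R) × R) :
    dualTau c a e p = p.1 e - p.2 * a e + c e := by
  simp [dualTau, mul_comm]

theorem Pd_concaveOn_general {𝕜 : Type*} [Field 𝕜] [LinearOrder 𝕜] [IsStrictOrderedRing 𝕜]
    [Fintype ι] (c a : ι → 𝕜) (Vc : 𝕜) :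
    ConcaveOn 𝕜 {p : (ι → 𝕜) × 𝕜 | ∀ e, 0 < p.1 e}
      (fun p : (ι → 𝕜) × 𝕜 =>
        -(1/4) * ∑ e, (p.1 e - p.2 * a e + c e)^2 / p.1 e - p.2 * Vc) := by
  have hsum : ConvexOn 𝕜 {p : (ι → 𝕜) × 𝕜 | ∀ e, 0 < p.1 e}
      (fun p ↦ ∑ e, (p.1 e - p.2 * a e + c e) ^ 2 / p.1 e) := by
    simpa only [dualTau_apply, dualCoord_apply] using
      convexOn_sum_sq_div_affineMap (dualTau c a) dualCoord
  have hlin : ConvexOn 𝕜 {p : (ι → 𝕜) × 𝕜 | ∀ e, 0 < p.1 e} (fun p ↦ p.2 * Vc) :=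
    (LinearMap.mulRight 𝕜 Vc ∘ₗ LinearMap.snd 𝕜 (ι → 𝕜) 𝕜).convexOn hsum.1
  have hquarter : (0 : 𝕜) ≤ 1 / 4 := by positivity
  simpa only [neg_mul] using! (hsum.smul hquarter).neg.sub hlin

end CanonicalDual

/-- Concavity of the canonical dual function on `{(σ, ς) : σ > 0}`. -/
theorem Pd_concaveOn (n : ℕ) (c a : Fin n → ℝ) (Vc : ℝ) :
    ConcaveOn ℝ {p : (Fin n → ℝ) × ℝ | ∀ e, 0 < p.1 e}
      (fun p : (Fin n → ℝ) × ℝ =>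
        -(1/4) * ∑ e, (p.1 e - p.2 * a e + c e)^2 / p.1 e - p.2 * Vc) :=
  Pd_concaveOn_general c a Vc
end
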